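/- arXiv:1510.04355 — 2 statements merged into one kernel-verified Lean document; each statement's English description precedes it below -/
import Mathlib

section
/- Let Ψ̄ : ℝ⁴ → ℝ be the unique twice continuously differentiable radially symmetric function with ΔΨ̄(y) + 1/(1+|y|²) = 0 on ℝ⁴ and Ψ̄(0) = 1. Then there exist a constant I ∈ ℝ and a constant C > 0 such that |Ψ̄(y) + (1/2)·ln|y| − I| ≤ C/|y| for all y ∈ ℝ⁴ with |y| ≥ 2. -/
/-- The Euclidean Laplacian `Δu(y) = Σᵢ ∂²u/∂yᵢ²` on `ℝ⁴`. -/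
noncomputable def laplacian (u : EuclideanSpace ℝ (Fin 4) → ℝ)
    (x : EuclideanSpace ℝ (Fin 4)) : ℝ :=
  ∑ i : Fin 4,
    fderiv ℝ (fun y => fderiv ℝ u y (EuclideanSpace.single i 1)) x (EuclideanSpace.single i 1)

lemma aux_tangent (Ψ : EuclideanSpace ℝ (Fin 4) → ℝ) (h1 : ContDiff ℝ 2 Ψ)
    (h2 : ∀ y z, ‖y‖ = ‖z‖ → Ψ y = Ψ z) (y w : EuclideanSpace ℝ (Fin 4)) (hn : ‖y‖ = ‖w‖)
    (hi : inner ℝ y w = 0) : fderiv ℝ Ψ y w = 0 := by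
  have hc : HasDerivAt (fun θ : ℝ => Real.cos θ • y + Real.sin θ • w)
      ((-Real.sin 0) • y + Real.cos 0 • w) 0 :=
    ((Real.hasDerivAt_cos 0).smul_const y).add ((Real.hasDerivAt_sin 0).smul_const w)
  have hy : Real.cos 0 • y + Real.sin 0 • w = y := by simp
  have hd : HasFDerivAt Ψ (fderiv ℝ Ψ y) (Real.cos 0 • y + Real.sin 0 • w) := by
    rw [hy]; exact (h1.differentiable (by norm_num) y).hasFDerivAt
  have h := hd.comp_hasDerivAt (0 : ℝ) hc
  have hconst : (Ψ ∘ fun θ : ℝ => Real.cos θ • y + Real.sin θ • w) = fun _ => Ψ y := by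
    funext θ
    apply h2
    have : ‖Real.cos θ • y + Real.sin θ • w‖ ^ 2 = ‖y‖ ^ 2 := by
      rw [norm_add_sq_real, inner_smul_left, inner_smul_right, hi, norm_smul, norm_smul, ← hn,
        mul_pow, mul_pow, Real.norm_eq_abs, Real.norm_eq_abs, sq_abs, sq_abs]
      linear_combination ‖y‖ ^ 2 * Real.sin_sq_add_cos_sq θ
    exact (sq_eq_sq₀ (norm_nonneg _) (norm_nonneg _)).1 this
  rw [hconst] at h
  have := h.unique (hasDerivAt_const _ _)
  simpa using this

lemma aux_diff (Ψ : EuclideanSpace ℝ (Fin 4) → ℝ) (h1 : ContDiff ℝ 2 Ψ) (b : EuclideanSpace ℝ (Fin 4)) :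
    Differentiable ℝ (fun y => fderiv ℝ Ψ y b) := by
  have : ContDiff ℝ 1 (fderiv ℝ Ψ) := h1.fderiv_right (by norm_num)
  exact (this.clm_apply contDiff_const).differentiable (by norm_num)

lemma aux_line (F : EuclideanSpace ℝ (Fin 4) → ℝ) (hF : Differentiable ℝ F) (p b : EuclideanSpace ℝ (Fin 4)) (t : ℝ) :
    HasDerivAt (fun s : ℝ => F (p + s • b)) (fderiv ℝ F (p + t • b) b) t := by
  have hc : HasDerivAt (fun s : ℝ => p + s • b) b t := by
    simpa using ((hasDerivAt_id t).smul_const b).const_add p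
  exact (hF (p + t • b)).hasFDerivAt.comp_hasDerivAt t hc

lemma aux_second (Ψ : EuclideanSpace ℝ (Fin 4) → ℝ) (h1 : ContDiff ℝ 2 Ψ)
    (h2 : ∀ y z, ‖y‖ = ‖z‖ → Ψ y = Ψ z) (a b : EuclideanSpace ℝ (Fin 4)) (ha : ‖a‖ = 1) (hb : ‖b‖ = 1)
    (hab : inner ℝ a b = 0) (r : ℝ) :
    fderiv ℝ (fun y => fderiv ℝ Ψ y b) (r • a) b * r = fderiv ℝ Ψ (r • a) a := by
  have key : ∀ t : ℝ, fderiv ℝ Ψ (r • a + t • b) b * r = fderiv ℝ Ψ (r • a + t • b) a * t := by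
    intro t
    have hba : inner ℝ b a = 0 := by rw [real_inner_comm]; exact hab
    have h := aux_tangent Ψ h1 h2 (r • a + t • b) (r • b - t • a) (by
      rw [← sq_eq_sq₀ (norm_nonneg _) (norm_nonneg _), norm_add_sq_real, norm_sub_sq_real]
      simp [inner_smul_left, inner_smul_right, hab, hba, norm_smul, ha, hb]) (by
      simp [inner_add_left, inner_sub_right, inner_smul_left, inner_smul_right, hab, hba, ha, hb]
      ring)
    simp only [map_sub, map_smul, smul_eq_mul] at h
    linarith
  have d1 := (aux_line _ (aux_diff Ψ h1 b) (r • a) b 0).mul_const r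
  have d2 := (aux_line _ (aux_diff Ψ h1 a) (r • a) b 0).mul (hasDerivAt_id (0 : ℝ))
  have he : (fun s : ℝ => fderiv ℝ Ψ (r • a + s • b) b * r) =
      (fun s : ℝ => fderiv ℝ Ψ (r • a + s • b) a) * id := by
    funext t; exact key t
  rw [he] at d1
  have := d1.unique d2
  simpa using this

theorem radial_solution_dim4_log_asymptotics (Ψ : EuclideanSpace ℝ (Fin 4) → ℝ)
    (h1 : ContDiff ℝ 2 Ψ)
    (h2 : ∀ y z, ‖y‖ = ‖z‖ → Ψ y = Ψ z)
    (h3 : ∀ y, laplacian Ψ y + 1 / (1 + ‖y‖ ^ 2) = 0)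
    (h4 : Ψ 0 = 1) :
    ∃ (I C : ℝ), 0 < C ∧
      ∀ y : EuclideanSpace ℝ (Fin 4), 2 ≤ ‖y‖ →
        |Ψ y + (1 / 2) * Real.log ‖y‖ - I| ≤ C / ‖y‖ := by
  set a : EuclideanSpace ℝ (Fin 4) := EuclideanSpace.single 0 1 with hadef
  have ha : ‖a‖ = 1 := by simp [a]
  obtain ⟨f, hf⟩ : ∃ f : ℝ → ℝ, f = fun r => Ψ (r • a) := ⟨_, rfl⟩
  obtain ⟨f1, hf1⟩ : ∃ f1 : ℝ → ℝ, f1 = fun r => fderiv ℝ Ψ (r • a) a := ⟨_, rfl⟩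
  obtain ⟨f2, hf2⟩ : ∃ f2 : ℝ → ℝ,
      f2 = fun r => fderiv ℝ (fun y => fderiv ℝ Ψ y a) (r • a) a := ⟨_, rfl⟩
  have D1 : ∀ r, HasDerivAt f (f1 r) r := by
    intro r
    simpa [hf, hf1] using aux_line Ψ (h1.differentiable (by norm_num)) 0 a r
  have D2 : ∀ r, HasDerivAt f1 (f2 r) r := by
    intro r
    simpa [hf1, hf2] using aux_line _ (aux_diff Ψ h1 a) 0 a r
  have ode : ∀ r, r * f2 r + 3 * f1 r + r / (1 + r ^ 2) = 0 := by
    intro r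
    have hs : ∀ i : Fin 4, i ≠ 0 → fderiv ℝ (fun y => fderiv ℝ Ψ y (EuclideanSpace.single i 1))
        (r • a) (EuclideanSpace.single i 1) * r = f1 r := by
      intro i hi
      rw [hf1]
      exact aux_second Ψ h1 h2 a _ ha (by simp) (by
        simp [a, EuclideanSpace.inner_single_left, hi.symm]) r
    have h := h3 (r • a)
    rw [laplacian, Fin.sum_univ_four, norm_smul, ha, mul_one, Real.norm_eq_abs, sq_abs] at h
    have e1 := hs 1 (by decide)
    have e2 := hs 2 (by decide)
    have e3 := hs 3 (by decide)
    have e0 : f2 r = fderiv ℝ (fun y => fderiv ℝ Ψ y (EuclideanSpace.single 0 1))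
        (r • a) (EuclideanSpace.single 0 1) := by rw [hf2]
    rw [← e0] at h
    linear_combination r * h - e1 - e2 - e3
  have hpos : ∀ r : ℝ, 0 < 1 + r ^ 2 := fun r => by positivity
  have DL : ∀ r : ℝ, HasDerivAt (fun s : ℝ => Real.log (1 + s ^ 2)) (2 * r / (1 + r ^ 2)) r := by
    intro r
    have := ((hasDerivAt_pow 2 r).const_add 1).log (hpos r).ne'
    simpa using this
  have G0 : ∀ r, r ^ 3 * f1 r + r ^ 2 / 2 - Real.log (1 + r ^ 2) / 2 = 0 := by
    have DG : ∀ r, HasDerivAt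
        (fun r => r ^ 3 * f1 r + r ^ 2 / 2 - Real.log (1 + r ^ 2) / 2) 0 r := by
      intro r
      have := (((hasDerivAt_pow 3 r).mul (D2 r)).add ((hasDerivAt_pow 2 r).div_const 2)).sub
        ((DL r).div_const 2)
      refine HasDerivAt.congr_deriv this ?_
      have hr := (hpos r).ne'
      push_cast
      have hi : (1 + r ^ 2) * (1 + r ^ 2)⁻¹ = 1 := mul_inv_cancel₀ hr
      linear_combination r ^ 2 * ode r - r * hi
    intro r
    have := is_const_of_deriv_eq_zero (fun r => (DG r).differentiableAt) (fun r => (DG r).deriv) r 0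
    simpa using this
  have K0 : ∀ r : ℝ, 0 < r → f r + Real.log (1 + r ^ 2) * (1 + (r ^ 2)⁻¹) / 4
      = f 1 + Real.log 2 / 2 := by
    have DK : ∀ r : ℝ, 0 < r → HasDerivAt
        (fun r => f r + Real.log (1 + r ^ 2) * (1 + (r ^ 2)⁻¹) / 4) 0 r := by
      intro r hr
      have := (D1 r).add (((DL r).mul
        (((hasDerivAt_pow 2 r).inv (by positivity)).const_add 1)).div_const 4)
      refine HasDerivAt.congr_deriv this ?_
      have hr1 := (hpos r).ne'
      have hf1 : f1 r = (Real.log (1 + r ^ 2) / 2 - r ^ 2 / 2) / r ^ 3 := by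
        rw [eq_div_iff (by positivity)]
        linarith [G0 r]
      rw [hf1]
      simp
      field_simp
      ring
    intro r hr
    have := isOpen_Ioi.is_const_of_deriv_eq_zero (s := Set.Ioi (0 : ℝ)) isPreconnected_Ioi
      (fun r hr => (DK r hr).differentiableAt.differentiableWithinAt)
      (fun r hr => (DK r hr).deriv) (Set.mem_Ioi.2 hr) (Set.mem_Ioi.2 one_pos)
    refine this.trans ?_
    norm_num
    ring
  refine ⟨f 1 + Real.log 2 / 2, 1, one_pos, ?_⟩
  intro y hy
  have hΨ : Ψ y = f ‖y‖ := by
    rw [hf]; apply h2; simp [norm_smul, ha]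
  rw [hΨ]
  generalize ‖y‖ = r at hy
  have hr : 0 < r := by linarith
  rw [← K0 r hr]
  have hl : Real.log (1 + r ^ 2) = 2 * Real.log r + Real.log (1 + (r ^ 2)⁻¹) := by
    have : 1 + r ^ 2 = r ^ 2 * (1 + (r ^ 2)⁻¹) := by field_simp; ring
    rw [this, Real.log_mul (by positivity) (by positivity), Real.log_pow]
    norm_num
  have b1 : Real.log (1 + (r ^ 2)⁻¹) ≤ (r ^ 2)⁻¹ := by
    have := Real.log_le_sub_one_of_pos (x := 1 + (r ^ 2)⁻¹) (by positivity)
    linarith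
  have b0 : 0 ≤ Real.log (1 + (r ^ 2)⁻¹) := Real.log_nonneg (by
    have : 0 < (r ^ 2)⁻¹ := by positivity
    linarith)
  have c0 : 0 ≤ Real.log (1 + r ^ 2) := Real.log_nonneg (by nlinarith)
  have c1 : Real.log (1 + r ^ 2) ≤ 2 * r := by
    have h5 : Real.log (1 + r ^ 2) ≤ Real.log ((1 + r) ^ 2) :=
      Real.log_le_log (hpos r) (by nlinarith)
    rw [Real.log_pow] at h5
    have := Real.log_le_sub_one_of_pos (x := 1 + r) (by positivity)
    push_cast at h5
    linarith
  have e : f r + 1 / 2 * Real.log r - (f r + Real.log (1 + r ^ 2) * (1 + (r ^ 2)⁻¹) / 4)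
      = -(Real.log (1 + r ^ 2) * (r ^ 2)⁻¹ / 4 + Real.log (1 + (r ^ 2)⁻¹) / 4) := by
    linear_combination (-1 / 4) * hl
  have hq : 0 < (r ^ 2)⁻¹ := by positivity
  rw [e, abs_neg, abs_of_nonneg (by positivity)]
  have c2 : Real.log (1 + r ^ 2) * (r ^ 2)⁻¹ ≤ 2 * r * (r ^ 2)⁻¹ :=
    mul_le_mul_of_nonneg_right c1 hq.le
  have e2 : r * (r ^ 2)⁻¹ = 1 / r := by field_simp
  nlinarith
end

section
/- Let Ψ̄ : ℝ⁴ → ℝ be the unique twice continuously differentiable radially symmetric function with ΔΨ̄(y) + 1/(1+|y|²) = 0 on ℝ⁴ and Ψ̄(0) = 1, and write Ψ̄(y) = ψ(|y|) for a function ψ : [0,∞) → ℝ. Then there exists a constant C > 0 such that |ψ'(r) + 1/(2r)| ≤ C · ln(1+r)/r³ for all r ≥ 2; that is, ψ'(r) = −(1/(2r))·(1 + O(ln(1+r)/r²)) as r → ∞. -/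
open Real


theorem aux_norm {y : EuclideanSpace ℝ (Fin 4)} (hy : y ≠ 0) :
    HasFDerivAt (fun z : EuclideanSpace ℝ (Fin 4) => ‖z‖) ((1 / ‖y‖) • innerSL ℝ y) y := by
  have h := (hasStrictFDerivAt_norm_sq y).hasFDerivAt
  have hn : ‖y‖ ≠ 0 := norm_ne_zero_iff.mpr hy
  have h' := h.sqrt (by positivity)
  simp only [Real.sqrt_sq (norm_nonneg _)] at h'
  refine h'.congr_fderiv ?_
  ext v
  simp
  field_simp

theorem aux_fderiv (g : ℝ → ℝ) (g' : ℝ → ℝ) (hg : ∀ t, HasDerivAt g (g' t) t)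
    {y : EuclideanSpace ℝ (Fin 4)} (hy : y ≠ 0) (v : EuclideanSpace ℝ (Fin 4)) :
    fderiv ℝ (fun z : EuclideanSpace ℝ (Fin 4) => g ‖z‖) y v = g' ‖y‖ / ‖y‖ * inner ℝ y v := by
  have h := (hg ‖y‖).comp_hasFDerivAt y (aux_norm hy)
  have h2 : fderiv ℝ (fun z : EuclideanSpace ℝ (Fin 4) => g ‖z‖) y = _ := h.fderiv
  rw [h2]
  simp
  ring

theorem aux_second_s3 (g g' g'' : ℝ → ℝ) (hg : ∀ t, HasDerivAt g (g' t) t)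
    (hg' : ∀ t, HasDerivAt g' (g'' t) t) {t : ℝ} (ht : 0 < t) (i : Fin 4) :
    fderiv ℝ (fun y => fderiv ℝ (fun z : EuclideanSpace ℝ (Fin 4) => g ‖z‖) y (EuclideanSpace.single i 1))
      (EuclideanSpace.single 0 t) (EuclideanSpace.single i 1)
      = g' t / t + if i = 0 then g'' t - g' t / t else 0 := by
  set x : EuclideanSpace ℝ (Fin 4) := EuclideanSpace.single 0 t with hx
  have hxn : ‖x‖ = t := by simp [hx, abs_of_pos ht]
  have hx0 : x ≠ 0 := by rw [← norm_ne_zero_iff, hxn]; exact ht.ne'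
  have hev : (fun y => fderiv ℝ (fun z : EuclideanSpace ℝ (Fin 4) => g ‖z‖) y (EuclideanSpace.single i 1))
      =ᶠ[nhds x] (fun y : EuclideanSpace ℝ (Fin 4) => g' ‖y‖ / ‖y‖ * innerSL ℝ (EuclideanSpace.single i 1) y) := by
    filter_upwards [isOpen_ne.mem_nhds hx0] with y hy
    rw [aux_fderiv g g' hg hy, innerSL_apply_apply, real_inner_comm]
  rw [hev.fderiv_eq]
  have hq : HasDerivAt (fun s => g' s / s) ((g'' t * t - g' t * 1) / t ^ 2) ‖x‖ := by
    rw [hxn]; exact (hg' t).div (hasDerivAt_id t) ht.ne'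
  have hG := hq.comp_hasFDerivAt x (aux_norm hx0)
  have hL := (innerSL ℝ (EuclideanSpace.single i 1 : EuclideanSpace ℝ (Fin 4))).hasFDerivAt (x := x)
  have hm : HasFDerivAt (fun y : EuclideanSpace ℝ (Fin 4) => g' ‖y‖ / ‖y‖ * innerSL ℝ (EuclideanSpace.single i 1) y) _ x
    := hG.mul hL
  rw [hm.fderiv]
  simp only [add_apply, smul_apply, innerSL_apply_apply,
    Function.comp, hxn, smul_eq_mul]
  simp only [hx]
  by_cases hi : i = 0
  · subst hi
    simp [EuclideanSpace.inner_single_left]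
    field_simp
    ring
  · have hi' : ¬ (0 = i) := fun h => hi h.symm
    simp [hi, hi', EuclideanSpace.inner_single_left]

theorem radial_solution_dim4_derivative_asymptotics
    (Ψ : EuclideanSpace ℝ (Fin 4) → ℝ) (ψ : ℝ → ℝ)
    (h1 : ContDiff ℝ 2 Ψ)
    (h2 : ∀ y z, ‖y‖ = ‖z‖ → Ψ y = Ψ z)
    (h3 : ∀ y, laplacian Ψ y + 1 / (1 + ‖y‖ ^ 2) = 0)
    (h4 : Ψ 0 = 1)
    (hψ : ∀ y, Ψ y = ψ ‖y‖) :
    ∃ C : ℝ, 0 < C ∧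
      ∀ r : ℝ, 2 ≤ r →
        |deriv ψ r + 1 / (2 * r)| ≤ C * Real.log (1 + r) / r ^ 3 := by
  obtain ⟨g, hgdef⟩ : ∃ g : ℝ → ℝ, g = fun t => Ψ (t • EuclideanSpace.single 0 1) := ⟨_, rfl⟩
  have hgC : ContDiff ℝ 2 g := by rw [hgdef]; fun_prop
  have hg : ∀ t, HasDerivAt g (deriv g t) t := fun t =>
    (hgC.differentiable (by norm_num) t).hasDerivAt
  have hgC1 : ContDiff ℝ 1 (deriv g) := by
    have : ContDiff ℝ (1 + 1) g := by simpa [one_add_one_eq_two] using hgC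
    exact (contDiff_succ_iff_deriv.mp this).2.2
  have hg' : ∀ t, HasDerivAt (deriv g) (deriv (deriv g) t) t := fun t =>
    (hgC1.differentiable (by norm_num) t).hasDerivAt
  have hΨ : Ψ = fun z => g ‖z‖ := by
    funext z
    rw [hgdef]
    apply h2
    simp [norm_smul]
  have hode : ∀ t, 0 < t → 3 * deriv g t / t + deriv (deriv g) t + 1 / (1 + t ^ 2) = 0 := by
    intro t ht
    have h := h3 (EuclideanSpace.single 0 t)
    unfold laplacian at h
    rw [hΨ] at h
    simp only [aux_second_s3 g _ _ hg hg' ht] at h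
    simp [Fin.sum_univ_four] at h
    have e : 3 * deriv g t / t = 3 * (deriv g t / t) := by ring
    rw [e, one_div]
    linarith
  have key : ∀ r, 0 < r → r ^ 3 * deriv g r = - r ^ 2 / 2 + Real.log (1 + r ^ 2) / 2 := by
    intro r hr
    have hd : ∀ t, HasDerivAt (fun t => t ^ 3 * deriv g t - (- t ^ 2 / 2 + Real.log (1 + t ^ 2) / 2))
        (3 * t ^ 2 * deriv g t + t ^ 3 * deriv (deriv g) t - (- (2 * t) / 2 + (2 * t) / (1 + t ^ 2) / 2)) t := by
      intro t
      have a := (hasDerivAt_pow 3 t).mul (hg' t)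
      have b := ((hasDerivAt_pow 2 t).neg).div_const 2
      have c := (((hasDerivAt_pow 2 t).const_add 1).log (by positivity)).div_const 2
      have := a.sub (b.add c)
      refine HasDerivAt.congr_deriv this ?_
      norm_num
    have hc := constant_of_has_deriv_right_zero (a := 0) (b := r)
      (f := (fun t => t ^ 3 * deriv g t - (- t ^ 2 / 2 + Real.log (1 + t ^ 2) / 2)))
      (fun t _ => (hd t).continuousAt.continuousWithinAt)
      (by
        intro t ht
        refine HasDerivAt.hasDerivWithinAt ?_
        refine (hd t).congr_deriv ?_
        rcases ht.1.eq_or_lt with h0 | h0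
        · simp [← h0]
        · have := hode t h0
          have e : deriv (deriv g) t = - (3 * deriv g t / t) - 1 / (1 + t ^ 2) := by linarith
          rw [e]
          field_simp
          ring)
      r ⟨hr.le, le_rfl⟩
    simp at hc
    linarith
  refine ⟨1, one_pos, fun r hr => ?_⟩
  have hr0 : 0 < r := by linarith
  have hde : deriv ψ r = deriv g r := by
    apply Filter.EventuallyEq.deriv_eq
    filter_upwards [isOpen_Ioi.mem_nhds (show r ∈ Set.Ioi (0:ℝ) from hr0)] with s hs
    have hs' : (0:ℝ) < s := hs
    rw [hgdef]
    simp [hψ, norm_smul, abs_of_pos hs']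
  have e : deriv ψ r + 1 / (2 * r) = Real.log (1 + r ^ 2) / 2 / r ^ 3 := by
    rw [hde, eq_div_iff (by positivity), add_mul, mul_comm (deriv g r), key r hr0]
    field_simp
    ring
  have hl0 : 0 ≤ Real.log (1 + r ^ 2) := Real.log_nonneg (by nlinarith)
  rw [e, abs_of_nonneg (by positivity), one_mul]
  have hl : Real.log (1 + r ^ 2) ≤ 2 * Real.log (1 + r) := by
    have := Real.log_le_log (show 0 < 1 + r ^ 2 by positivity)
      (show 1 + r ^ 2 ≤ (1 + r) ^ 2 by nlinarith)
    rw [Real.log_pow] at this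
    exact_mod_cast this
  gcongr
  linarith
end
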